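/- Let n ≥ 3 and let S = {0, 1, b} ⊆ ℤ_n with b ≠ 0, 1. If it is not the case that n = 7 and b ∈ {3, 5}, then there exists an S-polychromatic coloring of ℤ_n with two colors; that is, there is χ : ℤ_n → Fin 2 such that for every x ∈ ℤ_n, the set {x, x+1, x+b} contains both colors. -/

import Mathlib

/-!
Represent `b` by an integer `0 ≤ b < n` and colour `y` by the parity of `y + ⌊y m / n⌋`, where
`m ≥ 0` and `m ≡ n (mod 2)`; the last condition makes the colouring `n`-periodic. It is the
alternating colouring disturbed at `m` evenly spread places: `y` and `y + 1` get the same colour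
only if `⌊y m / n⌋` jumps at `y`, that is only if `r = y m mod n` satisfies `r ≥ n - m`.
For such `y`, `⌊(y + b) m / n⌋ = ⌊y m / n⌋ + k` provided `(k - 1) n ≤ (b - 1) m` and `b m ≤ k n`,
so `y + b` gets the other colour as soon as `b + k` is odd (`balanced_coloring`).

It remains to choose `m` and `k` (`exists_params`). For `n` even take `m = 0`
and `k ∈ {0, 1}` with `b + k` odd, and for `n` odd and
`b` even take `m = k = 1`. If `n` and `b` are odd and `2 b ≤ n + 1`, take `k = 2` and the least odd
`m` with `n ≤ (b - 1) m`; then `b m ≤ 2 n` unless `n = 7` and `b = 3` (`exists_odd_multiplier`).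
If `2 b > n + 1`, the reflected value `n + 1 - b` has a multiplier `m`, which also works for `b`
with `k = m - 1`.
-/

/-- The least odd `m` with `n ≤ (b - 1) m` satisfies `b m ≤ 2 n`: from `(m - 2) (b - 1) < n` this is
an estimate which fails only for `b = 3`, `m = 5`, `n = 7`. -/
lemma exists_odd_multiplier (n b : ℤ) (hn : n % 2 = 1) (hb : b % 2 = 1) (hb3 : 3 ≤ b)
    (hbn : 2 * b ≤ n + 1) (h7 : ¬ (n = 7 ∧ b = 3)) :
    ∃ m : ℤ, 3 ≤ m ∧ m % 2 = 1 ∧ n ≤ (b - 1) * m ∧ b * m ≤ 2 * n := by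
  have key : ∃ j : ℕ, n ≤ (b - 1) * (2 * j + 1) :=
    ⟨n.toNat, by
      have : n ≤ (n.toNat : ℤ) := Int.self_le_toNat n
      nlinarith⟩
  classical
  have hspec := Nat.find_spec key
  have hmin := fun i => Nat.find_min key (m := i)
  generalize Nat.find key = j at hspec hmin
  have hj : 1 ≤ j := by
    by_contra h
    have : j = 0 := by omega
    subst this
    norm_num at hspec
    omega
  obtain ⟨i, rfl⟩ : ∃ i, j = i + 1 := ⟨j - 1, by omega⟩
  have h1 := hmin i (by omega)
  push_cast at *
  refine ⟨2 * (i + 1) + 1, by omega, by omega, hspec, ?_⟩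
  rcases Nat.eq_zero_or_pos i with rfl | hi
  · norm_num
    omega
  have hi' : (1 : ℤ) ≤ i := by exact_mod_cast hi
  -- For `b = 3` the estimate needs `i ≥ 2`; the case `i = 1` has `n = 7` or `n = 9`.
  rcases (by omega : b = 3 ∨ 5 ≤ b) with rfl | hb5
  · omega
  · nlinarith [mul_nonneg (sub_nonneg.2 hi') (sub_nonneg.2 hb5)]

lemma exists_params (n b : ℤ) (hn : 3 ≤ n) (hb : 2 ≤ b) (hbn : b < n)
    (h7 : ¬ (n = 7 ∧ (b = 3 ∨ b = 5))) :
    ∃ m k : ℤ, 0 ≤ m ∧ (n + m) % 2 = 0 ∧ (b + k) % 2 = 1 ∧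
      (k - 1) * n ≤ (b - 1) * m ∧ b * m ≤ k * n := by
  rcases Int.emod_two_eq_zero_or_one n with hn2 | hn2
  · rcases Int.emod_two_eq_zero_or_one b with hb2 | hb2
    · exact ⟨0, 1, by omega, by omega, by omega, by omega, by omega⟩
    · exact ⟨0, 0, by omega, by omega, by omega, by omega, by omega⟩
  rcases Int.emod_two_eq_zero_or_one b with hb2 | hb2
  · exact ⟨1, 1, by omega, by omega, by omega, by omega, by omega⟩
  rcases le_or_gt (2 * b) (n + 1) with h | h
  · obtain ⟨m, hm3, hm2, h1, h2⟩ :=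
      exists_odd_multiplier n b hn2 hb2 (by omega) h (by omega)
    exact ⟨m, 2, by omega, by omega, by omega, by linarith, h2⟩
  · obtain ⟨m, hm3, hm2, h1, h2⟩ :=
      exists_odd_multiplier n (n + 1 - b) hn2 (by omega) (by omega) (by omega) (by omega)
    exact ⟨m, m - 1, by omega, by omega, by omega, by linarith, by linarith⟩

lemma balanced_coloring (n b m k : ℤ) (hn : 0 < n) (hm0 : 0 ≤ m)
    (hbk : (b + k) % 2 = 1) (h1 : (k - 1) * n ≤ (b - 1) * m) (h2 : b * m ≤ k * n) (y : ℤ) :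
    ¬ ((y + y * m / n) % 2 = (y + 1 + (y + 1) * m / n) % 2 ∧
      (y + y * m / n) % 2 = (y + b + (y + b) * m / n) % 2) := by
  have hr := Int.emod_add_mul_ediv (y * m) n
  have hr0 := Int.emod_nonneg (y * m) hn.ne'
  have hrn := Int.emod_lt_of_pos (y * m) hn
  generalize y * m / n = q at *
  generalize y * m % n = r at *
  -- Without a jump at `y`, the colours of `y` and `y + 1` differ; with one, those of `y`, `y + b`.
  rcases lt_or_ge (r + m) n with h | h
  · have e : (y + 1) * m / n = q := by
      rw [Int.ediv_eq_iff_of_pos hn]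
      constructor <;> nlinarith
    rw [e]
    omega
  · have e : (y + b) * m / n = q + k := by
      rw [Int.ediv_eq_iff_of_pos hn]
      constructor <;> nlinarith
    rw [e]
    omega

/-- Let `n ≥ 3` and `S = {0, 1, b} ⊆ ZMod n` with `b ≠ 0, 1`.
If it is not the case that `n = 7` and `b ∈ {3, 5}`, then there is a
2-coloring `χ : ZMod n → Fin 2` such that every translate `{x, x+1, x+b}`
contains both colors. -/
theorem exists_poly_coloring_01b (n : ℕ) (hn : 3 ≤ n) (b : ZMod n)
    (hb0 : b ≠ 0) (hb1 : b ≠ 1) (h7 : ¬ (n = 7 ∧ (b = 3 ∨ b = 5))) :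
    ∃ χ : ZMod n → Fin 2, ∀ x : ZMod n, ∀ c : Fin 2,
      ∃ s ∈ ({0, 1, b} : Set (ZMod n)), χ (x + s) = c := by
  have : NeZero n := ⟨by omega⟩
  have hcast : ∀ x : ZMod n, (((x.val : ℕ) : ℤ) : ZMod n) = x := fun x => by simp
  have hbval : ∀ a : ℕ, b ≠ (a : ZMod n) → b.val ≠ a := by
    rintro a h rfl
    exact h (by simp)
  have hv0 := hbval 0 (by simpa using hb0)
  have hv1 := hbval 1 (by simpa using hb1)
  have hvn := b.val_lt
  have hv7 : ¬ ((n : ℤ) = 7 ∧ ((b.val : ℤ) = 3 ∨ (b.val : ℤ) = 5)) := by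
    rintro ⟨h, h'⟩
    refine h7 ⟨by exact_mod_cast h, h'.imp (fun e => ?_) (fun e => ?_)⟩ <;>
    · rw [← hcast b, e]
      norm_num
  obtain ⟨m, k, hm0, hpar, hbk, h1, h2⟩ :=
    exists_params n b.val (by omega) (by omega) (by omega) hv7
  set g : ℤ → ℤ := fun y => (y + y * m / n) % 2 with hg
  have hper : ∀ y z : ℤ, (y : ZMod n) = z → g y = g z := by
    intro y z h
    obtain ⟨t, ht⟩ := (ZMod.intCast_eq_intCast_iff_dvd_sub y z n).1 h
    obtain ⟨u, hu⟩ : (2 : ℤ) ∣ n + m := Int.dvd_of_emod_eq_zero hpar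
    have e : z * m / n = y * m / n + t * m := by
      rw [show z * m = y * m + t * m * n by linear_combination m * ht]
      exact Int.add_mul_ediv_right _ _ (by omega)
    have e' : z + z * m / n = y + y * m / n + 2 * (u * t) := by
      rw [e]
      linear_combination ht + t * hu
    simp only [hg, e']
    omega
  have hg2 : ∀ y, g y = 0 ∨ g y = 1 := fun y => Int.emod_two_eq_zero_or_one _
  refine ⟨fun x => if g x.val = 0 then 0 else 1, fun x c => ?_⟩
  have hmain : ¬ (g x.val = g (x.val + 1) ∧ g x.val = g (x.val + b.val)) :=
    balanced_coloring n b.val m k (by omega) hm0 hbk h1 h2 x.val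
  rw [hper (x.val + 1) (x + 1).val (by simp), hper (x.val + b.val) (x + b).val (by simp)] at hmain
  have ha := hg2 x.val
  have hb := hg2 (x + 1).val
  have hc := hg2 (x + b).val
  simp only [Set.mem_insert_iff, Set.mem_singleton_iff, exists_eq_or_imp, exists_eq_left, add_zero]
  rcases ha with ha | ha <;> rcases hb with hb | hb <;> rcases hc with hc | hc <;>
    simp only [ha, hb, hc] at hmain ⊢ <;> fin_cases c <;> simp_all
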